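/- For every s ∈ ℝ and b > 1/2 there exists C > 0 such that for every τ ∈ (0,1] and every sequence (u_n)_{n∈ℤ} of functions in H^s(𝕋) with only finitely many nonzero terms, sup_{n∈ℤ} ‖u_n‖_{H^s} ≤ C ‖(u_n)‖_{X^{s,b}_τ}. -/

import Mathlib

noncomputable section

open MeasureTheory Complex Filter Topology AddCircle
open scoped ENNReal

abbrev Torus := AddCircle (2 * Real.pi)

instance : Fact (0 < 2 * Real.pi) := ⟨by positivity⟩

/-- Japanese bracket `⟨x⟩ = (1+|x|²)^{1/2}`. -/
def jbr (x : ℝ) : ℝ := Real.sqrt (1 + x ^ 2)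

/-- The Sobolev `H^s` norm on the torus, via Fourier coefficients. -/
def hsNorm (s : ℝ) (f : Torus → ℂ) : ℝ :=
  Real.sqrt (∑' k : ℤ, jbr k ^ (2 * s) * ‖fourierCoeff f k‖ ^ 2)

/-- Membership in `H^s(𝕋)` (as a function): square integrable with finite `H^s` norm. -/
def InHs (s : ℝ) (f : Torus → ℂ) : Prop :=
  MemLp f 2 haarAddCircle ∧ Summable fun k : ℤ => jbr k ^ (2 * s) * ‖fourierCoeff f k‖ ^ 2

/-- The frequency cutoff `Π_τ`, keeping the Fourier modes `|k| ≤ τ^{-1/2}`. -/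
def projC (τ : ℝ) (f : Torus → ℂ) : Torus → ℂ := fun x =>
  ∑' k : ℤ, if |(k : ℝ)| ≤ τ ^ (-(1 : ℝ) / 2) then fourierCoeff f k * fourier k x else 0

/-- The free Schrödinger group `e^{it∂_x²}`, given by the Fourier multiplier `e^{-itk²}`. -/
def schrod (t : ℝ) (f : Torus → ℂ) : Torus → ℂ := fun x =>
  ∑' k : ℤ, Complex.exp (-Complex.I * t * (k : ℂ) ^ 2) * fourierCoeff f k * fourier k x

/-- Continuity on `I` with values in `L²(𝕋)`. -/
def ContL2On (I : Set ℝ) (u : ℝ → Torus → ℂ) : Prop :=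
  (∀ t ∈ I, MemLp (u t) 2 haarAddCircle) ∧
  ∀ t ∈ I, Tendsto (fun t' => eLpNorm (u t' - u t) 2 haarAddCircle) (nhdsWithin t I) (nhds 0)

/-- Continuity on `I` with values in `H^s(𝕋)`. -/
def ContHsOn (s : ℝ) (I : Set ℝ) (u : ℝ → Torus → ℂ) : Prop :=
  (∀ t ∈ I, InHs s (u t)) ∧
  ∀ t ∈ I, Tendsto (fun t' => hsNorm s (u t' - u t)) (nhdsWithin t I) (nhds 0)

/-- The cubic nonlinearity `|f|² f` (pointwise). -/
def cubic (f : Torus → ℂ) : Torus → ℂ := fun x => (‖f x‖ : ℂ) ^ 2 * f x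

/-- The filtered cubic nonlinearity `Π_τ(|Π_τ f|² Π_τ f)`. -/
def projCubic (τ : ℝ) (f : Torus → ℂ) : Torus → ℂ := projC τ (cubic (projC τ f))

/-- `v` is the (global-in-time) mild solution of the projected equation
`i∂_t v = -∂_x² v - μ Π_τ(|Π_τ v|² Π_τ v)`, `v(0) = Π_τ u₀`. -/
def IsProjSolution (μ τ : ℝ) (u₀ : Torus → ℂ) (v : ℝ → Torus → ℂ) : Prop :=
  ContL2On Set.univ v ∧
  ∀ t : ℝ, ∀ x : Torus,
    v t x = schrod t (projC τ u₀) x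
      + Complex.I * μ * ∫ s in (0 : ℝ)..t, schrod (t - s) (projCubic τ (v s)) x

/-- The cubic NLS `i∂_t u = -∂_x² u - μ |u|² u` holds in the sense of space-time
distributions on `(0,T) × 𝕋` (tested against `ψ(t) e^{-ikx}`). -/
def DistribSolOn (μ T : ℝ) (u : ℝ → Torus → ℂ) : Prop :=
  ∀ k : ℤ, ∀ ψ : ℝ → ℂ, ContDiff ℝ (⊤ : ℕ∞) ψ → tsupport ψ ⊆ Set.Ioo 0 T →
    -Complex.I * ∫ t : ℝ, deriv ψ t * fourierCoeff (u t) k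
      = (k : ℂ) ^ 2 * ∫ t : ℝ, ψ t * fourierCoeff (u t) k
        - (μ : ℂ) * ∫ t : ℝ, ψ t * fourierCoeff (cubic (u t)) k

/-- `u ∈ L⁴((0,T) × 𝕋)`. -/
def SpaceTimeL4 (T : ℝ) (u : ℝ → Torus → ℂ) : Prop :=
  MemLp (fun p : ℝ × Torus => u p.1 p.2) 4
    ((volume.restrict (Set.Ioo 0 T)).prod haarAddCircle)

/-- Space-time Fourier transform `ṽ(σ,k)` of `v : ℝ × 𝕋 → ℂ`. -/
def stFT (v : ℝ → Torus → ℂ) (σ : ℝ) (k : ℤ) : ℂ :=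
  ∫ t : ℝ, Complex.exp (-Complex.I * σ * t) * fourierCoeff (v t) k

/-- The (continuous) Bourgain `X^{s,b}` norm, valued in `ℝ≥0∞`. -/
def XcNorm (s b : ℝ) (v : ℝ → Torus → ℂ) : ℝ≥0∞ :=
  (∫⁻ σ : ℝ, ∑' k : ℤ,
      ENNReal.ofReal ((1 + |(k : ℝ)|) ^ (2 * s) * (1 + |σ + (k : ℝ) ^ 2|) ^ (2 * b)
        * ‖stFT v σ k‖ ^ 2)) ^ (1 / 2 : ℝ)

/-- The restriction norm `‖u‖_{X^{s,b}(T)}` is bounded by `M`: some extension of `u`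
from `(0,T)` has `X^{s,b}` norm at most `M`. -/
def XresBounded (s b T : ℝ) (u : ℝ → Torus → ℂ) (M : ℝ≥0∞) : Prop :=
  ∃ v : ℝ → Torus → ℂ, (∀ t ∈ Set.Ioo 0 T, v t = u t) ∧ XcNorm s b v ≤ M

/-- `u` is a Bourgain-class solution of cubic NLS on `[0,T]` with datum `u₀`. -/
def IsNLSSolution (μ T : ℝ) (u₀ : Torus → ℂ) (u : ℝ → Torus → ℂ) : Prop :=
  ContL2On (Set.Icc 0 T) u ∧ SpaceTimeL4 T u ∧
  (∃ b ∈ Set.Ioo (1 / 2 : ℝ) (5 / 8 : ℝ), ∃ v : ℝ → Torus → ℂ,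
      (∀ t ∈ Set.Ioo 0 T, v t = u t) ∧ XcNorm 0 b v < ⊤) ∧
  u 0 = u₀ ∧ DistribSolOn μ T u

/-- One step of the pointwise nonlinear flow `e^{iμτ|Π_τ f|²} Π_τ f`. -/
def lieFlow (μ τ : ℝ) (f : Torus → ℂ) : Torus → ℂ := fun x =>
  Complex.exp (Complex.I * μ * τ * (‖projC τ f x‖ : ℂ) ^ 2) * projC τ f x

/-- The filtered Lie splitting scheme `u⁰ = Π_τ u₀`,
`u^{n+1} = e^{iτ∂_x²} Π_τ (e^{iμτ|Π_τ uⁿ|²} Π_τ uⁿ)`. -/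
def lieScheme (μ τ : ℝ) (u₀ : Torus → ℂ) : ℕ → Torus → ℂ
  | 0 => projC τ u₀
  | n + 1 => schrod τ (projC τ (lieFlow μ τ (lieScheme μ τ u₀ n)))

/-- `d_τ(σ) = (e^{iτσ}-1)/τ`. -/
def dtau (τ σ : ℝ) : ℂ := (Complex.exp (Complex.I * τ * σ) - 1) / τ

/-- The discrete Bourgain `X^{s,b}_τ` norm of a sequence of functions on the torus. -/
def XdNorm (τ s b : ℝ) (u : ℤ → Torus → ℂ) : ℝ :=
  Real.sqrt (∫ σ in Set.Ioc (-(Real.pi / τ)) (Real.pi / τ),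
    ∑' k : ℤ, jbr k ^ (2 * s) * jbr ‖dtau τ (σ - (k : ℝ) ^ 2)‖ ^ (2 * b) *
      ‖(τ : ℂ) * ∑' m : ℤ, fourierCoeff (u m) k * Complex.exp (Complex.I * m * τ * σ)‖ ^ 2)

/-- The discrete space-time Lebesgue norm `‖(u_n)‖_{ℓ^p_τ L^q}`. -/
def lpLqNorm (τ p q : ℝ) (u : ℤ → Torus → ℂ) : ℝ :=
  (τ * ∑' n : ℤ, (eLpNorm (u n) (ENNReal.ofReal q) haarAddCircle).toReal ^ p) ^ (1 / p)

/-!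
A sequence is recovered from its discrete Fourier transform by integrating over one period of
frequencies. For a single spatial mode `k`, inserting the weight `⟨d_τ(σ - k²)⟩^b` and its inverse
and applying Cauchy–Schwarz bounds `|û_n(k)|²` by the part of the squared `X^{0,b}_τ` norm carried
by `k` times a constant multiple of `∫ ⟨d_τ(σ - k²)⟩^{-2b} dσ`. By periodicity that integral does
not depend on `k`, and since `|d_τ(σ)| ≥ (2/π)|σ|` on the period it is at most
`(π/2) ∫_ℝ ⟨x⟩^{-2b} dx`, which is finite for `b > 1/2` and does not involve `τ`. It remains to
multiply by `⟨k⟩^{2s}` and to sum over `k`.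
-/

open scoped Real

section JapaneseBracket

lemma jbr_pos (x : ℝ) : 0 < jbr x :=
  Real.sqrt_pos.2 (by positivity)

lemma jbr_le_jbr {x y : ℝ} (h : |x| ≤ |y|) : jbr x ≤ jbr y :=
  Real.sqrt_le_sqrt (by gcongr 1 + ?_; exact sq_le_sq.2 h)

lemma continuous_jbr : Continuous jbr := by
  unfold jbr
  fun_prop

lemma continuous_jbr_rpow (r : ℝ) : Continuous fun x => jbr x ^ r :=
  continuous_jbr.rpow_const fun x => Or.inl (jbr_pos x).ne'

lemma jbr_rpow_two_mul (x r : ℝ) : jbr x ^ (2 * r) = (jbr x ^ r) ^ 2 := by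
  rw [mul_comm, Real.rpow_mul (jbr_pos x).le, Real.rpow_two]

lemma integrable_inv_jbr_rpow {r : ℝ} (hr : 1 < r) : Integrable fun x => (jbr x ^ r)⁻¹ := by
  refine (integrable_rpow_neg_one_add_norm_sq (E := ℝ) (μ := volume) (r := r)
    (by simpa using hr)).congr (.of_forall fun x => ?_)
  have hx : 0 ≤ 1 + x ^ 2 := by positivity
  simp only [jbr, Real.norm_eq_abs, sq_abs]
  rw [Real.sqrt_eq_rpow, ← Real.rpow_mul hx, ← Real.rpow_neg hx]
  ring_nf

lemma integral_inv_jbr_rpow_pos {r : ℝ} (hr : 1 < r) : 0 < ∫ x, (jbr x ^ r)⁻¹ := by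
  have hpos (x : ℝ) : 0 < (jbr x ^ r)⁻¹ := inv_pos.2 (Real.rpow_pos_of_pos (jbr_pos x) r)
  have hcont : Continuous fun x => (jbr x ^ r)⁻¹ :=
    (continuous_jbr_rpow r).inv₀ fun x => (Real.rpow_pos_of_pos (jbr_pos x) r).ne'
  exact integral_pos_of_integrable_nonneg_nonzero hcont (integrable_inv_jbr_rpow hr)
    (fun x => (hpos x).le) (hpos 0).ne'

end JapaneseBracket

section DifferenceSymbol

variable {τ : ℝ}

lemma continuous_dtau (τ : ℝ) : Continuous (dtau τ) := by
  unfold dtau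
  fun_prop

lemma norm_dtau (τ σ : ℝ) : ‖dtau τ σ‖ = 2 * |Real.sin (τ * σ / 2)| / |τ| := by
  have hexp : Complex.I * τ * σ = Complex.I * ((τ * σ : ℝ) : ℂ) := by push_cast; ring
  rw [dtau, hexp, norm_div, Complex.norm_exp_I_mul_ofReal_sub_one, Complex.norm_real,
    Real.norm_eq_abs, Real.norm_eq_abs, abs_mul, abs_two]

lemma norm_dtau_le (τ σ : ℝ) : ‖dtau τ σ‖ ≤ 2 / |τ| := by
  rw [norm_dtau]
  gcongr
  linarith [Real.abs_sin_le_one (τ * σ / 2)]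

lemma two_div_pi_mul_abs_le_norm_dtau (hτ : 0 < τ) {σ : ℝ} (hσ : |σ| ≤ π / τ) :
    2 / π * |σ| ≤ ‖dtau τ σ‖ := by
  have habs : |τ * σ / 2| = τ * |σ| / 2 := by rw [abs_div, abs_mul, abs_of_pos hτ, abs_two]
  have hhalf : |τ * σ / 2| ≤ π / 2 := by
    rw [le_div_iff₀ hτ] at hσ
    linarith
  have hsin : 2 / π * |τ * σ / 2| ≤ |Real.sin (τ * σ / 2)| := Real.mul_abs_le_abs_sin hhalf
  rw [norm_dtau, abs_of_pos hτ, le_div_iff₀ hτ]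
  rw [habs] at hsin
  linarith

lemma periodic_dtau (hτ : τ ≠ 0) : Function.Periodic (dtau τ) (2 * π / τ) := by
  intro σ
  have hτ' : (τ : ℂ) ≠ 0 := by exact_mod_cast hτ
  have hexp : Complex.I * τ * ((σ + 2 * π / τ : ℝ) : ℂ)
      = Complex.I * τ * σ + 2 * π * Complex.I := by
    push_cast
    field_simp
  rw [dtau, hexp, Complex.exp_periodic, dtau]

end DifferenceSymbol

section FrequencyCell

/-- The frequency interval `(-π/τ, π/τ]`, a fundamental domain for the period `2π/τ` of discrete
Fourier transforms with time step `τ`. -/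
abbrev freqCell (τ : ℝ) : Set ℝ := Set.Ioc (-(π / τ)) (π / τ)

variable {τ : ℝ} {E : Type*} [NormedAddCommGroup E] [NormedSpace ℝ E]

lemma integral_freqCell (hτ : 0 < τ) (f : ℝ → E) :
    ∫ σ in freqCell τ, f σ = ∫ σ in (-(π / τ))..(-(π / τ) + 2 * π / τ), f σ := by
  have hend : -(π / τ) + 2 * π / τ = π / τ := by ring
  have hpos : 0 < π / τ := by positivity
  rw [hend, intervalIntegral.integral_of_le (by linarith)]

lemma integral_freqCell_comp_sub (hτ : 0 < τ) {f : ℝ → E}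
    (hf : Function.Periodic f (2 * π / τ)) (c : ℝ) :
    ∫ σ in freqCell τ, f (σ - c) = ∫ σ in freqCell τ, f σ := by
  rw [integral_freqCell hτ, integral_freqCell hτ, intervalIntegral.integral_comp_sub_right f c,
    add_sub_right_comm, hf.intervalIntegral_add_eq]

end FrequencyCell

section ModulationWeight

/-- The weight `⟨d_τ(σ)⟩^{2b}` by which the discrete Bourgain norm penalizes the distance `σ` of a
space-time frequency to the characteristic set. -/
def modulationWeight (τ b σ : ℝ) : ℝ := jbr ‖dtau τ σ‖ ^ (2 * b)

variable {τ b : ℝ}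

lemma modulationWeight_pos (τ b σ : ℝ) : 0 < modulationWeight τ b σ :=
  Real.rpow_pos_of_pos (jbr_pos _) _

lemma continuous_modulationWeight (τ b : ℝ) : Continuous (modulationWeight τ b) :=
  (continuous_jbr_rpow (2 * b)).comp (continuous_dtau τ).norm

lemma modulationWeight_le (τ : ℝ) (hb : 0 ≤ b) (σ : ℝ) :
    modulationWeight τ b σ ≤ jbr (2 / |τ|) ^ (2 * b) := by
  refine Real.rpow_le_rpow (jbr_pos _).le (jbr_le_jbr ?_) (by positivity)
  rw [abs_norm]
  exact (norm_dtau_le τ σ).trans (le_abs_self _)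

lemma jbr_rpow_le_modulationWeight (hτ : 0 < τ) (hb : 0 ≤ b) {σ : ℝ} (hσ : |σ| ≤ π / τ) :
    jbr (2 / π * σ) ^ (2 * b) ≤ modulationWeight τ b σ := by
  refine Real.rpow_le_rpow (jbr_pos _).le (jbr_le_jbr ?_) (by positivity)
  rw [abs_norm, abs_mul, abs_of_pos (by positivity : 0 < 2 / π)]
  exact two_div_pi_mul_abs_le_norm_dtau hτ hσ

lemma periodic_modulationWeight (hτ : τ ≠ 0) (b : ℝ) :
    Function.Periodic (modulationWeight τ b) (2 * π / τ) := fun σ => by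
  rw [modulationWeight, periodic_dtau hτ σ, modulationWeight]

lemma continuous_inv_modulationWeight (τ b : ℝ) :
    Continuous fun σ => (modulationWeight τ b σ)⁻¹ :=
  (continuous_modulationWeight τ b).inv₀ fun σ => (modulationWeight_pos τ b σ).ne'

lemma integral_inv_modulationWeight_le (hτ : 0 < τ) (hb : 1 / 2 < b) (c : ℝ) :
    ∫ σ in freqCell τ, (modulationWeight τ b (σ - c))⁻¹
      ≤ π / 2 * ∫ x, (jbr x ^ (2 * b))⁻¹ := by
  have hmajorant : Integrable fun σ => (jbr (2 / π * σ) ^ (2 * b))⁻¹ :=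
    (integrable_inv_jbr_rpow (by linarith)).comp_mul_left' (by positivity)
  have hperiodic : Function.Periodic (fun σ => (modulationWeight τ b σ)⁻¹) (2 * π / τ) :=
    fun σ => by simp only [periodic_modulationWeight hτ.ne' b σ]
  calc ∫ σ in freqCell τ, (modulationWeight τ b (σ - c))⁻¹
      = ∫ σ in freqCell τ, (modulationWeight τ b σ)⁻¹ :=
        integral_freqCell_comp_sub hτ hperiodic c
    _ ≤ ∫ σ in freqCell τ, (jbr (2 / π * σ) ^ (2 * b))⁻¹ := by
        refine setIntegral_mono_on (continuous_inv_modulationWeight τ b).integrableOn_Ioc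
          hmajorant.integrableOn measurableSet_Ioc fun σ hσ => ?_
        exact inv_anti₀ (Real.rpow_pos_of_pos (jbr_pos _) _)
          (jbr_rpow_le_modulationWeight hτ (by linarith) (abs_le.2 ⟨hσ.1.le, hσ.2⟩))
    _ ≤ ∫ σ, (jbr (2 / π * σ) ^ (2 * b))⁻¹ :=
        setIntegral_le_integral hmajorant
          (.of_forall fun σ => inv_nonneg.2 (Real.rpow_nonneg (jbr_pos _).le _))
    _ = π / 2 * ∫ x, (jbr x ^ (2 * b))⁻¹ := by
        rw [Measure.integral_comp_mul_left (fun x => (jbr x ^ (2 * b))⁻¹), inv_div, smul_eq_mul,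
          abs_of_pos (by positivity)]

end ModulationWeight

section CauchySchwarz

lemma sq_integral_le_integral_inv_mul_integral_mul_sq {α : Type*} [MeasurableSpace α]
    {μ : Measure α} {f w : α → ℝ} (hw : ∀ x, 0 < w x) (hwinv : Integrable (fun x => (w x)⁻¹) μ)
    (hwf : Integrable (fun x => w x * f x ^ 2) μ) :
    (∫ x, f x ∂μ) ^ 2 ≤ (∫ x, (w x)⁻¹ ∂μ) * ∫ x, w x * f x ^ 2 ∂μ := by
  by_cases hf : Integrable f μ
  swap
  · rw [integral_undef hf, zero_pow two_ne_zero]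
    exact mul_nonneg (integral_nonneg fun x => (inv_pos.2 (hw x)).le)
      (integral_nonneg fun x => mul_nonneg (hw x).le (sq_nonneg _))
  have hquadratic (t : ℝ) : 0 ≤ (∫ x, (w x)⁻¹ ∂μ) * (t * t) + (-2 * ∫ x, f x ∂μ) * t
      + ∫ x, w x * f x ^ 2 ∂μ :=
    calc 0 ≤ ∫ x, (w x)⁻¹ * (w x * f x - t) ^ 2 ∂μ :=
          integral_nonneg fun x => mul_nonneg (inv_pos.2 (hw x)).le (sq_nonneg _)
      _ = ∫ x, ((w x)⁻¹ * (t * t) + f x * (-2 * t)) + w x * f x ^ 2 ∂μ := by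
          congr with x
          have := (hw x).ne'
          field_simp
          ring
      _ = _ := by
          have hlinear : Integrable (fun x => (w x)⁻¹ * (t * t) + f x * (-2 * t)) μ :=
            (hwinv.mul_const _).add (hf.mul_const _)
          rw [integral_add hlinear hwf, integral_add (hwinv.mul_const _) (hf.mul_const _),
            integral_mul_const, integral_mul_const]
          ring
  have hdiscrim := discrim_le_zero hquadratic
  unfold discrim at hdiscrim
  linarith

end CauchySchwarz

section DiscreteFourier

variable {τ : ℝ} {E F : Type*} [NormedAddCommGroup E] [NormedSpace ℂ E]
  [NormedAddCommGroup F] [NormedSpace ℂ F]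

/-- The discrete-time Fourier transform `σ ↦ τ ∑ₘ e^{imτσ} aₘ` of a sequence of vectors; it has the
junk value `0` where the series is not summable. -/
def discreteFourier (τ : ℝ) (a : ℤ → E) (σ : ℝ) : E :=
  (τ : ℂ) • ∑' m : ℤ, Complex.exp (Complex.I * m * τ * σ) • a m

lemma norm_exp_I_mul_int_mul (m : ℤ) (τ σ : ℝ) : ‖Complex.exp (Complex.I * m * τ * σ)‖ = 1 := by
  have hexp : Complex.I * m * τ * σ = ((m * τ * σ : ℝ) : ℂ) * Complex.I := by push_cast; ring
  rw [hexp, Complex.norm_exp_ofReal_mul_I]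

lemma norm_exp_I_mul_int_mul_smul (m : ℤ) (τ σ : ℝ) (v : E) :
    ‖Complex.exp (Complex.I * m * τ * σ) • v‖ = ‖v‖ := by
  rw [norm_smul, norm_exp_I_mul_int_mul, one_mul]

lemma discreteFourier_const_smul (τ : ℝ) (c : ℂ) (a : ℤ → E) (σ : ℝ) :
    discreteFourier τ (fun m => c • a m) σ = c • discreteFourier τ a σ := by
  simp only [discreteFourier, smul_comm _ c, tsum_const_smul'']

lemma norm_discreteFourier_le (τ : ℝ) {a : ℤ → E} (ha : Summable fun m => ‖a m‖) (σ : ℝ) :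
    ‖discreteFourier τ a σ‖ ≤ |τ| * ∑' m, ‖a m‖ := by
  rw [discreteFourier, norm_smul, Complex.norm_real, Real.norm_eq_abs]
  gcongr
  refine tsum_of_norm_bounded ha.hasSum fun m => ?_
  exact (norm_exp_I_mul_int_mul_smul m τ σ (a m)).le

variable [CompleteSpace E]

lemma summable_exp_smul {a : ℤ → E} (ha : Summable fun m => ‖a m‖) (τ σ : ℝ) :
    Summable fun m : ℤ => Complex.exp (Complex.I * m * τ * σ) • a m :=
  .of_norm (by simpa only [norm_exp_I_mul_int_mul_smul] using ha)

lemma continuous_discreteFourier (τ : ℝ) {a : ℤ → E} (ha : Summable fun m => ‖a m‖) :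
    Continuous (discreteFourier τ a) :=
  (continuous_tsum (fun m => by fun_prop) ha
    fun m σ => (norm_exp_I_mul_int_mul_smul m τ σ (a m)).le).const_smul _

lemma map_discreteFourier (L : E →L[ℂ] F) (τ : ℝ) {a : ℤ → E} (ha : Summable fun m => ‖a m‖)
    (σ : ℝ) : L (discreteFourier τ a σ) = discreteFourier τ (fun m => L (a m)) σ := by
  simp only [discreteFourier, map_smul, L.map_tsum (summable_exp_smul ha τ σ)]

lemma integral_exp_mul_exp_freqCell (hτ : 0 < τ) (m n : ℤ) :
    ∫ σ in freqCell τ,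
        Complex.exp (Complex.I * (-n : ℤ) * τ * σ) * Complex.exp (Complex.I * m * τ * σ)
      = if m = n then (2 * π / τ : ℂ) else 0 := by
  have hperiod : 0 < 2 * π / τ := by positivity
  have : Fact (0 < 2 * π / τ) := ⟨hperiod⟩
  have hτ' : (τ : ℂ) ≠ 0 := by exact_mod_cast hτ.ne'
  have hfourier (j : ℤ) (σ : ℝ) :
      fourier j (σ : AddCircle (2 * π / τ)) = Complex.exp (Complex.I * j * τ * σ) := by
    rw [fourier_coe_apply]
    congr 1
    push_cast
    field_simp
  have hcoeff := fourierCoeff_eq_intervalIntegral (T := 2 * π / τ) (fourier m) n (-(π / τ))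
  rw [fourierCoeff_fourier, ← integral_freqCell hτ, one_div, eq_inv_smul_iff₀ hperiod.ne']
    at hcoeff
  simp only [hfourier, smul_eq_mul] at hcoeff
  rw [← hcoeff, Pi.single_apply]
  simp only [eq_comm, smul_ite, smul_zero, Complex.real_smul, mul_one]
  push_cast
  rfl

lemma integral_exp_smul_discreteFourier (hτ : 0 < τ) {a : ℤ → E} (ha : Summable fun m => ‖a m‖)
    (n : ℤ) :
    ∫ σ in freqCell τ, Complex.exp (Complex.I * (-n : ℤ) * τ * σ) • discreteFourier τ a σ
      = (2 * π : ℂ) • a n := by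
  let term (m : ℤ) (σ : ℝ) : E :=
    (Complex.exp (Complex.I * (-n : ℤ) * τ * σ) * Complex.exp (Complex.I * m * τ * σ)) •
      ((τ : ℂ) • a m)
  have hterm_integral (m : ℤ) :
      ∫ σ in freqCell τ, term m σ = if m = n then (2 * π : ℂ) • a n else 0 := by
    have hτ' : (τ : ℂ) ≠ 0 := by exact_mod_cast hτ.ne'
    simp only [term]
    rw [integral_smul_const, integral_exp_mul_exp_freqCell hτ]
    split_ifs with hmn
    · rw [hmn, smul_smul, div_mul_cancel₀ _ hτ']
    · rw [zero_smul]
  have hterm_norm (m : ℤ) (σ : ℝ) : ‖term m σ‖ = τ * ‖a m‖ := by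
    simp only [term, norm_smul, norm_mul, norm_exp_I_mul_int_mul, Complex.norm_real, one_mul,
      Real.norm_of_nonneg hτ.le]
  have hterm_integrable (m : ℤ) : IntegrableOn (term m) (freqCell τ) :=
    Continuous.integrableOn_Ioc (by fun_prop)
  have hsum := hasSum_integral_of_summable_integral_norm hterm_integrable (by
    simp only [hterm_norm, integral_const, smul_eq_mul]
    exact (ha.mul_left τ).mul_left _)
  simp only [hterm_integral] at hsum
  rw [(hasSum_ite_eq n ((2 * π : ℂ) • a n)).unique hsum]
  congr with σ
  simp only [term, discreteFourier, smul_comm _ (τ : ℂ), mul_smul, tsum_const_smul'']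

lemma two_pi_mul_norm_le_integral_norm_discreteFourier (hτ : 0 < τ) {a : ℤ → E}
    (ha : Summable fun m => ‖a m‖) (n : ℤ) :
    2 * π * ‖a n‖ ≤ ∫ σ in freqCell τ, ‖discreteFourier τ a σ‖ :=
  calc 2 * π * ‖a n‖ = ‖(2 * π : ℂ) • a n‖ := by
        simp [norm_smul, abs_of_pos Real.pi_pos]
    _ ≤ ∫ σ in freqCell τ, ‖discreteFourier τ a σ‖ := by
        rw [← integral_exp_smul_discreteFourier hτ ha n]
        refine (norm_integral_le_integral_norm _).trans_eq ?_
        simp only [norm_exp_I_mul_int_mul_smul]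

end DiscreteFourier

section Embedding

/-- The square `(8π)⁻¹ ∫ ⟨x⟩^{-2b} dx` of the embedding constant, that is, Fourier inversion's
`(2π)⁻²` times the bound `(π/2) ∫ ⟨x⟩^{-2b} dx` for the integral of the inverse weight. -/
def embeddingConstSq (b : ℝ) : ℝ := (8 * π)⁻¹ * ∫ x, (jbr x ^ (2 * b))⁻¹

variable {τ b : ℝ} {E : Type*} [NormedAddCommGroup E] [NormedSpace ℂ E] [CompleteSpace E]

lemma embeddingConstSq_pos (hb : 1 / 2 < b) : 0 < embeddingConstSq b :=
  mul_pos (by positivity) (integral_inv_jbr_rpow_pos (by linarith))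

lemma continuous_modulationWeight_mul_norm_discreteFourier_sq (τ b c : ℝ) {a : ℤ → E}
    (ha : Summable fun m => ‖a m‖) :
    Continuous fun σ => modulationWeight τ b (σ - c) * ‖discreteFourier τ a σ‖ ^ 2 :=
  ((continuous_modulationWeight τ b).comp (continuous_sub_right c)).mul
    ((continuous_discreteFourier τ ha).norm.pow 2)

lemma norm_sq_le_integral_modulationWeight_mul (hτ : 0 < τ) (hb : 1 / 2 < b) (c : ℝ) {a : ℤ → E}
    (ha : Summable fun m => ‖a m‖) (n : ℤ) :
    ‖a n‖ ^ 2 ≤ embeddingConstSq b *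
      ∫ σ in freqCell τ, modulationWeight τ b (σ - c) * ‖discreteFourier τ a σ‖ ^ 2 := by
  set energy := ∫ σ in freqCell τ, modulationWeight τ b (σ - c) * ‖discreteFourier τ a σ‖ ^ 2
  have henergy : 0 ≤ energy :=
    integral_nonneg fun σ => mul_nonneg (modulationWeight_pos τ b _).le (sq_nonneg _)
  have hinv_cont : Continuous fun σ => (modulationWeight τ b (σ - c))⁻¹ :=
    (continuous_inv_modulationWeight τ b).comp (continuous_sub_right c)
  have hsq : (2 * π * ‖a n‖) ^ 2 ≤ (π / 2 * ∫ x, (jbr x ^ (2 * b))⁻¹) * energy :=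
    calc (2 * π * ‖a n‖) ^ 2 ≤ (∫ σ in freqCell τ, ‖discreteFourier τ a σ‖) ^ 2 := by
          gcongr
          exact two_pi_mul_norm_le_integral_norm_discreteFourier hτ ha n
      _ ≤ (∫ σ in freqCell τ, (modulationWeight τ b (σ - c))⁻¹) * energy :=
          sq_integral_le_integral_inv_mul_integral_mul_sq (fun σ => modulationWeight_pos τ b _)
            hinv_cont.integrableOn_Ioc
            (continuous_modulationWeight_mul_norm_discreteFourier_sq τ b c ha).integrableOn_Ioc
      _ ≤ (π / 2 * ∫ x, (jbr x ^ (2 * b))⁻¹) * energy := by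
          gcongr
          exact integral_inv_modulationWeight_le hτ hb c
  calc ‖a n‖ ^ 2 = ((2 * π) ^ 2)⁻¹ * (2 * π * ‖a n‖) ^ 2 := by field_simp
    _ ≤ ((2 * π) ^ 2)⁻¹ * ((π / 2 * ∫ x, (jbr x ^ (2 * b))⁻¹) * energy) := by gcongr
    _ = embeddingConstSq b * energy := by
        rw [embeddingConstSq]
        field_simp
        ring

variable {κ : Type*}

lemma hasSum_norm_sq_lp_two {G : κ → Type*} [∀ k, NormedAddCommGroup (G k)] (f : lp G 2) :
    HasSum (fun k => ‖f k‖ ^ 2) (‖f‖ ^ 2) := by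
  simpa using lp.hasSum_norm (by norm_num) f

lemma discreteFourier_lp_apply (τ : ℝ) {a : ℤ → lp (fun _ : κ => E) 2}
    (ha : Summable fun m => ‖a m‖) (σ : ℝ) (k : κ) :
    discreteFourier τ a σ k = discreteFourier τ (fun m => a m k) σ :=
  map_discreteFourier (lp.evalCLM ℂ (fun _ : κ => E) 2 k) τ ha σ

lemma summable_norm_lp_apply {ι : Type*} {G : κ → Type*} [∀ k, NormedAddCommGroup (G k)]
    {a : ι → lp G 2} (ha : Summable fun m => ‖a m‖) (k : κ) : Summable fun m => ‖a m k‖ :=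
  .of_nonneg_of_le (fun _ => norm_nonneg _) (fun m => lp.norm_apply_le_norm two_ne_zero (a m) k) ha

lemma sum_modulationWeight_mul_le (τ : ℝ) (hb : 0 ≤ b) (ω : κ → ℝ)
    {a : ℤ → lp (fun _ : κ => E) 2} (ha : Summable fun m => ‖a m‖) (S : Finset κ) (σ : ℝ) :
    ∑ k ∈ S, modulationWeight τ b (σ - ω k) * ‖discreteFourier τ (fun m => a m k) σ‖ ^ 2
      ≤ jbr (2 / |τ|) ^ (2 * b) * (|τ| * ∑' m, ‖a m‖) ^ 2 := by
  have hweight : 0 ≤ jbr (2 / |τ|) ^ (2 * b) := Real.rpow_nonneg (jbr_pos _).le _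
  calc ∑ k ∈ S, modulationWeight τ b (σ - ω k) * ‖discreteFourier τ (fun m => a m k) σ‖ ^ 2
      ≤ ∑ k ∈ S, jbr (2 / |τ|) ^ (2 * b) * ‖discreteFourier τ a σ k‖ ^ 2 := by
        gcongr with k
        · exact modulationWeight_le τ hb _
        · rw [discreteFourier_lp_apply τ ha]
    _ = jbr (2 / |τ|) ^ (2 * b) * ∑ k ∈ S, ‖discreteFourier τ a σ k‖ ^ 2 :=
        (Finset.mul_sum ..).symm
    _ ≤ jbr (2 / |τ|) ^ (2 * b) * ‖discreteFourier τ a σ‖ ^ 2 := by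
        gcongr
        exact sum_le_hasSum S (fun k _ => sq_nonneg _) (hasSum_norm_sq_lp_two _)
    _ ≤ jbr (2 / |τ|) ^ (2 * b) * (|τ| * ∑' m, ‖a m‖) ^ 2 := by
        gcongr
        exact norm_discreteFourier_le τ ha σ

lemma hasSum_integral_modulationWeight_mul [Countable κ] (τ : ℝ) (hb : 0 ≤ b) (ω : κ → ℝ)
    {a : ℤ → lp (fun _ : κ => E) 2} (ha : Summable fun m => ‖a m‖) :
    HasSum
      (fun k => ∫ σ in freqCell τ,
        modulationWeight τ b (σ - ω k) * ‖discreteFourier τ (fun m => a m k) σ‖ ^ 2)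
      (∫ σ in freqCell τ, ∑' k,
        modulationWeight τ b (σ - ω k) * ‖discreteFourier τ (fun m => a m k) σ‖ ^ 2) := by
  have hnonneg (k : κ) (σ : ℝ) :
      0 ≤ modulationWeight τ b (σ - ω k) * ‖discreteFourier τ (fun m => a m k) σ‖ ^ 2 :=
    mul_nonneg (modulationWeight_pos τ b _).le (sq_nonneg _)
  have hintegrable (k : κ) : IntegrableOn (fun σ =>
      modulationWeight τ b (σ - ω k) * ‖discreteFourier τ (fun m => a m k) σ‖ ^ 2) (freqCell τ) :=
    (continuous_modulationWeight_mul_norm_discreteFourier_sq τ b (ω k)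
      (summable_norm_lp_apply ha k)).integrableOn_Ioc
  refine hasSum_integral_of_summable_integral_norm hintegrable ?_
  simp only [Real.norm_of_nonneg (hnonneg _ _)]
  refine summable_of_sum_le (fun k => integral_nonneg (hnonneg k))
    (c := ∫ _ in freqCell τ, jbr (2 / |τ|) ^ (2 * b) * (|τ| * ∑' m, ‖a m‖) ^ 2) fun S => ?_
  rw [← integral_finsetSum S fun k _ => hintegrable k]
  exact integral_mono (integrable_finsetSum S fun k _ => hintegrable k)
    (integrable_const _) (sum_modulationWeight_mul_le τ hb ω ha S)

lemma norm_lp_le_sqrt_integral_tsum [Countable κ] (hτ : 0 < τ) (hb : 1 / 2 < b) (ω : κ → ℝ)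
    {a : ℤ → lp (fun _ : κ => E) 2} (ha : Summable fun m => ‖a m‖) (n : ℤ) :
    ‖a n‖ ≤ √(embeddingConstSq b) * √(∫ σ in freqCell τ, ∑' k,
      modulationWeight τ b (σ - ω k) * ‖discreteFourier τ (fun m => a m k) σ‖ ^ 2) := by
  rw [← Real.sqrt_mul (embeddingConstSq_pos hb).le]
  refine Real.le_sqrt_of_sq_le ?_
  refine hasSum_le (fun k => ?_) (hasSum_norm_sq_lp_two (a n))
    ((hasSum_integral_modulationWeight_mul τ (by linarith) ω ha).mul_left (embeddingConstSq b))
  exact norm_sq_le_integral_modulationWeight_mul hτ hb (ω k) (summable_norm_lp_apply ha k) n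

end Embedding

section Sobolev

/-- The sequence `⟨k⟩^s f̂(k)` of weighted Fourier coefficients, which identifies the Sobolev space
`H^s` with a subspace of `ℓ²(ℤ)`. -/
def sobolevCoeff (s : ℝ) (f : Torus → ℂ) (k : ℤ) : ℂ := (jbr k ^ s : ℝ) • fourierCoeff f k

lemma norm_sobolevCoeff_sq (s : ℝ) (f : Torus → ℂ) (k : ℤ) :
    ‖sobolevCoeff s f k‖ ^ 2 = jbr k ^ (2 * s) * ‖fourierCoeff f k‖ ^ 2 := by
  rw [sobolevCoeff, norm_smul, mul_pow, Real.norm_eq_abs, sq_abs, jbr_rpow_two_mul]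

lemma InHs.memℓp_sobolevCoeff {s : ℝ} {f : Torus → ℂ} (hf : InHs s f) :
    Memℓp (sobolevCoeff s f) 2 :=
  memℓp_gen (by simpa [norm_sobolevCoeff_sq] using hf.2)

/-- The element `(⟨k⟩^s f̂(k))ₖ` of `ℓ²(ℤ)` attached to `f ∈ H^s`. -/
def InHs.toLp {s : ℝ} {f : Torus → ℂ} (hf : InHs s f) : lp (fun _ : ℤ => ℂ) 2 :=
  ⟨sobolevCoeff s f, hf.memℓp_sobolevCoeff⟩

lemma InHs.norm_toLp {s : ℝ} {f : Torus → ℂ} (hf : InHs s f) : ‖hf.toLp‖ = hsNorm s f := by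
  rw [hsNorm, ← Real.sqrt_sq (norm_nonneg hf.toLp), ← (hasSum_norm_sq_lp_two hf.toLp).tsum_eq]
  exact congrArg _ (tsum_congr (norm_sobolevCoeff_sq s f))

lemma hsNorm_zero (s : ℝ) : hsNorm s 0 = 0 := by
  simp [hsNorm, fourierCoeff]

lemma XdNorm_eq_sqrt_integral_tsum (τ s b : ℝ) (u : ℤ → Torus → ℂ) :
    XdNorm τ s b u = √(∫ σ in freqCell τ, ∑' k : ℤ, modulationWeight τ b (σ - (k : ℝ) ^ 2) *
      ‖discreteFourier τ (fun m => sobolevCoeff s (u m) k) σ‖ ^ 2) := by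
  have hcoeff (k : ℤ) (σ : ℝ) : ‖discreteFourier τ (fun m => sobolevCoeff s (u m) k) σ‖ ^ 2
      = jbr k ^ (2 * s) * ‖discreteFourier τ (fun m => fourierCoeff (u m) k) σ‖ ^ 2 := by
    simp only [sobolevCoeff, ← Complex.coe_smul (jbr k ^ s)]
    rw [discreteFourier_const_smul, norm_smul, mul_pow, Complex.norm_real, Real.norm_eq_abs,
      sq_abs, jbr_rpow_two_mul]
  simp only [hcoeff]
  simp only [XdNorm, modulationWeight, discreteFourier, smul_eq_mul, mul_comm (Complex.exp _),
    mul_assoc, mul_left_comm (jbr _ ^ (2 * s))]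

theorem discrete_bourgain_linfty_embedding_general (s b : ℝ) (hb : 1 / 2 < b) :
    ∃ C > (0 : ℝ), ∀ τ > (0 : ℝ), ∀ u : ℤ → Torus → ℂ,
      (∀ n, InHs s (u n)) → Summable (fun n => hsNorm s (u n)) →
      ∀ n : ℤ, hsNorm s (u n) ≤ C * XdNorm τ s b u := by
  refine ⟨√(embeddingConstSq b), Real.sqrt_pos.2 (embeddingConstSq_pos hb), ?_⟩
  intro τ hτ u hu hsum n
  have hsum_lp : Summable fun m => ‖(hu m).toLp‖ := by simpa only [InHs.norm_toLp] using hsum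
  rw [XdNorm_eq_sqrt_integral_tsum, ← (hu n).norm_toLp]
  exact norm_lp_le_sqrt_integral_tsum hτ hb (fun k : ℤ => (k : ℝ) ^ 2) hsum_lp n

end Sobolev

/-- The embedding `X^{s,b}_τ ⊂ ℓ^∞_τ H^s` for `b > 1/2`, uniformly in `τ`. -/
theorem discrete_bourgain_linfty_embedding (s b : ℝ) (hb : 1 / 2 < b) :
    ∃ C > (0 : ℝ), ∀ τ ∈ Set.Ioc (0 : ℝ) 1, ∀ u : ℤ → Torus → ℂ,
      (∀ n, InHs s (u n)) → {n : ℤ | u n ≠ 0}.Finite →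
      ∀ n : ℤ, hsNorm s (u n) ≤ C * XdNorm τ s b u := by
  obtain ⟨C, hC, hbound⟩ := discrete_bourgain_linfty_embedding_general s b hb
  refine ⟨C, hC, fun τ hτ u hu hfin => hbound τ hτ.1 u hu (summable_of_hasFiniteSupport ?_)⟩
  exact hfin.subset fun m hm hzero => hm ((congrArg (hsNorm s) hzero).trans (hsNorm_zero s))
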